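/- arXiv:2404.06271 — 2 statements merged into one kernel-verified Lean document; each statement's English description precedes it below -/
import Mathlib

section
/- Let i: F₂ ↪ F₁ be an embedding of fields, let ν₁, ν₂ be discrete valuations on F₁, F₂ respectively, and let e be a positive integer such that ν₁(i(x)) = e·ν₂(x) for all x∈F₂ˣ. Then i maps O_{ν₂} into O_{ν₁} and induces an embedding ī: k_{ν₂} ↪ k_{ν₁} of residue fields, and for every n≥1 and every a∈Λ^n(F₂ˣ) one has ∂_{ν₁}(Λ^n(i)(a)) = e · Λ^{n−1}(ī)(∂_{ν₂}(a)), where Λ^n(i) and Λ^{n−1}(ī) are the maps induced on exterior powers. (This is the valuation-theoretic content of the paper's lemma on functoriality of the residue: for a dominant morphism of smooth varieties sending an irreducible divisor D₁ onto D₂ with multiplicity e = e(D₁,D₂), one has ∂_{D₁}(φ*(a)) = e(D₁,D₂)·(φ̄)*(∂_{D₂}(a)).) -/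
/-!
The embedding `i` multiplies valuations by `e > 0`, so it maps `O_{ν₂}` into `O_{ν₁}` and the
maximal ideal into the maximal ideal. The composite `O_{ν₂} → O_{ν₁} → k_{ν₁}` therefore factors
through the surjection `O_{ν₂} → k_{ν₂}`, which gives `ī` (`exists_residue_map`).

For the formula, both sides are linear in `a`, so it is enough to compare them on a spanning set.
With a uniformizer `p` of `ν₂`, every element of `F₂ˣ` is a power of `p` times a unit, so by
multilinearity and antisymmetry `Λ^{n+1}(F₂ˣ)` is spanned by the wedges `x ∧ u₁ ∧ … ∧ u_n` with all
`u_j` units (`span_wedge_units`). On such a wedge the defining property of the tame symbols computes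
both sides: since `ν₁(i(u_j)) = e·0 = 0`, the left side is `ν₁(i(x))` times the wedge of the residues
of the `i(u_j)`, the right side is `e·ν₂(x)` times the wedge of the `ī(ū_j)`, and these agree.
-/

open scoped TensorProduct

set_option maxHeartbeats 1000000
set_option synthInstance.maxHeartbeats 1000000

noncomputable section

/-! ## The ℚ-vector space `G ⊗ ℚ` attached to a multiplicative abelian group `G`,
and its exterior powers `Λ^n(G)`. -/

/-- `G ⊗_ℤ ℚ` for a multiplicative abelian group `G`. -/
abbrev QW (G : Type*) [CommGroup G] : Type _ := ℚ ⊗[ℤ] (Additive G)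

/-- The image of `g : G` in `G ⊗ ℚ`. -/
def toQ {G : Type*} [CommGroup G] (g : G) : QW G :=
  (1 : ℚ) ⊗ₜ[ℤ] (Additive.ofMul g)

open Classical in
/-- The image of a nonzero field element in `Eˣ ⊗ ℚ` (zero is sent to zero). -/
def toQF {E : Type*} [Field E] (x : E) : QW Eˣ :=
  if h : x = 0 then 0 else toQ (Units.mk0 x h)

/-- `Λ^n(G)`: the `n`-th exterior power over `ℚ` of `G ⊗ ℚ`. -/
def Lambda (n : ℕ) (G : Type*) [CommGroup G] : Type _ := ⋀[ℚ]^n (QW G)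

instance (n : ℕ) (G : Type*) [CommGroup G] : AddCommGroup (Lambda n G) :=
  inferInstanceAs (AddCommGroup (⋀[ℚ]^n (QW G)))

instance (n : ℕ) (G : Type*) [CommGroup G] : Module ℚ (Lambda n G) :=
  inferInstanceAs (Module ℚ (⋀[ℚ]^n (QW G)))

/-- The underlying element of the ambient exterior algebra of `Λ^n(G)`. -/
def Lambda.amb {n : ℕ} {G : Type*} [CommGroup G] (x : Lambda n G) :
    ExteriorAlgebra ℚ (QW G) :=
  Subtype.val x

/-- Wedge `x₁ ∧ … ∧ x_n` of field elements, in the ambient exterior algebra of `Eˣ ⊗ ℚ`. -/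
def fw {E : Type*} [Field E] {n : ℕ} (v : Fin n → E) : ExteriorAlgebra ℚ (QW Eˣ) :=
  ExteriorAlgebra.ιMulti ℚ n fun i => toQF (v i)

/-- Wedge `x₁ ∧ … ∧ x_n` of field elements, as an element of `Λ^n(Eˣ)`. -/
def wedge {E : Type*} [Field E] {n : ℕ} (v : Fin n → E) : Lambda n Eˣ :=
  ⟨fw v, ExteriorAlgebra.ιMulti_range ℚ n (Set.mem_range_self _)⟩

/-- The map `ExteriorAlgebra(G ⊗ ℚ) → ExteriorAlgebra(G' ⊗ ℚ)` induced by a homomorphism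
`f : G →* G'`; it restricts to the functorial map `Λ^n(G) → Λ^n(G')` in each degree. -/
def lamMap {G G' : Type*} [CommGroup G] [CommGroup G'] (f : G →* G') :
    ExteriorAlgebra ℚ (QW G) →ₐ[ℚ] ExteriorAlgebra ℚ (QW G') :=
  ExteriorAlgebra.map (LinearMap.baseChange ℚ (MonoidHom.toAdditive f).toIntLinearMap)

/-! ## The group `B₂(E)` and the five-term relations. -/

/-- The cross-ratio of four points of `P¹(E) = E ∪ {∞}` (`∞ = none`), with value in `E`:
for pairwise distinct arguments at most one argument is `∞`, and the value is the usual
cross-ratio `((z₁−z₃)(z₂−z₄))/((z₁−z₄)(z₂−z₃))`, extended to `∞` in the usual way. -/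
def crP {E : Type*} [Field E] : Option E → Option E → Option E → Option E → E
  | some z₁, some z₂, some z₃, some z₄ => ((z₁ - z₃) * (z₂ - z₄)) / ((z₁ - z₄) * (z₂ - z₃))
  | none, some z₂, some z₃, some z₄ => (z₂ - z₄) / (z₂ - z₃)
  | some z₁, none, some z₃, some z₄ => (z₁ - z₃) / (z₁ - z₄)
  | some z₁, some z₂, none, some z₄ => (z₂ - z₄) / (z₁ - z₄)
  | some z₁, some z₂, some z₃, none => (z₁ - z₃) / (z₂ - z₃)
  | _, _, _, _ => 0

/-- The subspace of relations defining `B₂(E)`: spanned by `{0}₂`, `{1}₂`, `{∞}₂` and the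
five-term elements `Σᵢ (−1)ⁱ {cr(z₁,…,ẑᵢ,…,z₅)}₂` for pairwise distinct `z₁,…,z₅ ∈ P¹(E)`. -/
def fiveTermRel (E : Type*) [Field E] : Submodule ℚ (Option E →₀ ℚ) :=
  Submodule.span ℚ
    ({Finsupp.single (some 0) 1, Finsupp.single (some 1) 1, Finsupp.single none 1} ∪
      {x | ∃ z : Fin 5 → Option E, (∀ i j, i ≠ j → z i ≠ z j) ∧
        x = ∑ i : Fin 5, (-1 : ℚ) ^ (i : ℕ) •
          Finsupp.single (some (crP (z (i.succAbove 0)) (z (i.succAbove 1))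
            (z (i.succAbove 2)) (z (i.succAbove 3)))) 1})

/-- `B₂(E)`: the ℚ-vector space with basis `{x}₂`, `x ∈ P¹(E)`, modulo `{0}₂`, `{1}₂`,
`{∞}₂` and the five-term relations. -/
def B2 (E : Type*) [Field E] : Type _ := (Option E →₀ ℚ) ⧸ fiveTermRel E

instance (E : Type*) [Field E] : AddCommGroup (B2 E) :=
  inferInstanceAs (AddCommGroup ((Option E →₀ ℚ) ⧸ fiveTermRel E))

instance (E : Type*) [Field E] : Module ℚ (B2 E) :=
  inferInstanceAs (Module ℚ ((Option E →₀ ℚ) ⧸ fiveTermRel E))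

/-- The class `{x}₂ ∈ B₂(E)` of `x ∈ E`. -/
def B2sym {E : Type*} [Field E] (x : E) : B2 E :=
  Submodule.Quotient.mk (Finsupp.single (some x) 1)

/-! ## Discrete valuation fields, with a chosen realization `K` of the residue field. -/

/-- A discrete valuation `ν` on a field `F`, together with a realization of its residue
field as a field `K`: `v` is a surjective homomorphism `Fˣ → ℤ` satisfying the ultrametric
inequality, and `res : F → K` realizes `K` as the residue field `O_ν/m_ν` (by convention
`res` is normalized to vanish outside of `O_ν`, so that this data is rigid). -/
structure DVF (F K : Type*) [Field F] [Field K] where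
  v : Fˣ → ℤ
  v_mul : ∀ x y : Fˣ, v (x * y) = v x + v y
  v_surj : Function.Surjective v
  v_min : ∀ x y z : Fˣ, (z : F) = (x : F) + (y : F) → min (v x) (v y) ≤ v z
  res : F → K
  res_zero : res 0 = 0
  res_one : res 1 = 1
  res_add : ∀ x y : Fˣ, 0 ≤ v x → 0 ≤ v y → res ((x : F) + (y : F)) = res (x : F) + res (y : F)
  res_mul : ∀ x y : Fˣ, 0 ≤ v x → 0 ≤ v y → res ((x : F) * (y : F)) = res (x : F) * res (y : F)
  res_vanish : ∀ x : Fˣ, 0 < v x → res (x : F) = 0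
  res_unit : ∀ x : Fˣ, v x = 0 → res (x : F) ≠ 0
  res_junk : ∀ x : Fˣ, v x < 0 → res (x : F) = 0
  res_surj : ∀ c : K, c ≠ 0 → ∃ x : Fˣ, v x = 0 ∧ res (x : F) = c

/-- `D` is *the* tame symbol `∂_ν : Λ^{n+1}(Fˣ) → Λ^n(Kˣ)` of the discrete valuation `w`:
it is ℚ-linear and `∂_ν(x ∧ u₂ ∧ … ∧ u_{n+1}) = ν(x)·(ū₂ ∧ … ∧ ū_{n+1})` whenever
`u₂, …, u_{n+1}` are units (for `n = 0` this reads `∂_ν(x) = ν(x) ∈ ℚ = Λ^0(Kˣ)`). -/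
def IsTameSymbol {F K : Type*} [Field F] [Field K] (w : DVF F K) (n : ℕ)
    (D : Lambda (n+1) Fˣ →ₗ[ℚ] Lambda n Kˣ) : Prop :=
  ∀ (x : Fˣ) (u : Fin n → Fˣ), (∀ i, w.v (u i) = 0) →
    D (wedge (Fin.cons (x : F) (fun i => (u i : F)))) =
      (w.v x : ℚ) • wedge (fun i => w.res (u i : F))

/-- `DB` is *the* tame symbol `∂_ν^B : B₂(F)⊗Λ^{n+1}(Fˣ) → B₂(K)⊗Λ^n(Kˣ)` on the
polylogarithmic side, relative to the tame symbol `D = ∂_ν : Λ^{n+1}(Fˣ) → Λ^n(Kˣ)`: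
`∂_ν^B({a}₂⊗b) = 0` when `ν(a) ≠ 0`, and `∂_ν^B({u}₂⊗b) = −{ū}₂⊗∂_ν(b)` for `u` a unit. -/
def IsTameSymbolB {F K : Type*} [Field F] [Field K] (w : DVF F K) (n : ℕ)
    (D : Lambda (n+1) Fˣ →ₗ[ℚ] Lambda n Kˣ)
    (DB : (B2 F ⊗[ℚ] Lambda (n+1) Fˣ) →ₗ[ℚ] (B2 K ⊗[ℚ] Lambda n Kˣ)) : Prop :=
  (∀ a : Fˣ, (a : F) ≠ 1 → w.v a ≠ 0 → ∀ b : Lambda (n+1) Fˣ,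
      DB (B2sym (a : F) ⊗ₜ b) = 0) ∧
  (∀ u : Fˣ, w.v u = 0 → ∀ b : Lambda (n+1) Fˣ,
      DB (B2sym (u : F) ⊗ₜ b) = - (B2sym (w.res (u : F)) ⊗ₜ D b))

/-- `δ` is *the* differential `δ_{n+2} : B₂(E)⊗Λ^n(Eˣ) → Λ^{n+2}(Eˣ)` of the
polylogarithmic complex: `δ({x}₂ ⊗ w) = x ∧ (1−x) ∧ w` for `x ∈ E∖{0,1}`. -/
def IsDelta (E : Type*) [Field E] (n : ℕ)
    (δ : (B2 E ⊗[ℚ] Lambda n Eˣ) →ₗ[ℚ] Lambda (n+2) Eˣ) : Prop :=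
  ∀ x : E, x ≠ 0 → x ≠ 1 → ∀ b : Lambda n Eˣ,
    (δ (B2sym x ⊗ₜ b)).amb = fw ![x, 1 - x] * b.amb

/-- The subspace `D_m ⊆ B₂(K)⊗Λ^{m−2}(Kˣ)` (here `n = m−2`): the ℚ-span of the elements
`{x}₂ ⊗ (x ∧ w)` with `x ∈ K∖{0,1}` and `w ∈ Λ^{m−3}(Kˣ)`; it is `0` when `m = 2`. -/
def Dspan (K : Type*) [Field K] : (n : ℕ) → Submodule ℚ (B2 K ⊗[ℚ] Lambda n Kˣ)
  | 0 => ⊥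
  | (n+1) => Submodule.span ℚ
      {z | ∃ x : K, x ≠ 0 ∧ x ≠ 1 ∧ ∃ y : Lambda (n+1) Kˣ,
        (∃ w ∈ ⋀[ℚ]^n (QW Kˣ), y.amb = fw ![x] * w) ∧ z = B2sym x ⊗ₜ y}

/-- A discrete valuation (with residue field realized as `k`) on a field `L` over `K`,
trivial on `K` and inducing on `K ⊆ O_ν` the canonical copy of `K` inside `k`. -/
structure KDVF (K L k : Type*) [Field K] [Field L] [Field k] [Algebra K L] [Algebra K k]
    extends DVF L k where
  v_triv : ∀ (c : K) (u : Lˣ), (u : L) = algebraMap K L c → v u = 0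
  res_alg : ∀ c : K, res (algebraMap K L c) = algebraMap K k c

/-- `F` is a one-dimensional field over `K`: finitely generated of transcendence degree 1. -/
def IsOneDim (K F : Type*) [Field K] [Field F] [Algebra K F] : Prop :=
  (∃ s : Finset F, IntermediateField.adjoin K (s : Set F) = ⊤) ∧
  ∃ t : F, Transcendental K t ∧
    Algebra.IsAlgebraic (IntermediateField.adjoin K ({t} : Set F)) F

/-- `L` is a two-dimensional field over `K`: finitely generated of transcendence degree 2. -/
def IsTwoDim (K L : Type*) [Field K] [Field L] [Algebra K L] : Prop :=
  (∃ s : Finset L, IntermediateField.adjoin K (s : Set L) = ⊤) ∧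
  ∃ t : Fin 2 → L, AlgebraicIndependent K t ∧
    Algebra.IsAlgebraic (IntermediateField.adjoin K (Set.range t)) L

universe u

/-- The data of a divisorial valuation on a field `L` over `K`: a residue field `k` which is
one-dimensional over `K`, together with a discrete valuation of `L` over `K` with residue
field `k`. -/
structure DValData (K L : Type u) [Field K] [Field L] [Algebra K L] : Type (u+1) where
  k : Type u
  [fieldk : Field k]
  [algk : Algebra K k]
  w : KDVF K L k
  onedim : IsOneDim K k

attribute [instance] DValData.fieldk DValData.algk

/-- `vf : Lˣ → ℤ` is a divisorial valuation of `L` over `K` (an element of `dval(L)`):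
a discrete valuation trivial on `K` whose residue field is one-dimensional over `K`. -/
def IsDVal (K L : Type u) [Field K] [Field L] [Algebra K L] (vf : Lˣ → ℤ) : Prop :=
  ∃ d : DValData K L, d.w.v = vf

/-- The set `dval(L)` of divisorial valuations of `L` over `K`, as a type. -/
def DVal (K L : Type u) [Field K] [Field L] [Algebra K L] : Type u :=
  {vf : Lˣ → ℤ // IsDVal K L vf}

/-- `h` is a lifted reciprocity map (in weight `m = n+2 ≥ 2`) on the one-dimensional field
`F` over `K`.  The set `val(F)` of discrete valuations of `F` trivial on `K` (whose residue
fields are the finite extension `K` of `K`) is the type `KDVF K F K`; the maps `∂_ν`, `∂_ν^B`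
and `δ` are specified through their characteristic predicates, as they are unique. -/
def IsLiftedRec (K F : Type*) [Field K] [Field F] [Algebra K F] (n : ℕ)
    (h : Lambda (n+3) Fˣ →ₗ[ℚ] ((B2 K ⊗[ℚ] Lambda n Kˣ) ⧸ Dspan K n)) : Prop :=
  -- (i)  h(δ_{m+1}(α)) = Tot_F(α) mod D_m
  (∀ (δF : (B2 F ⊗[ℚ] Lambda (n+1) Fˣ) →ₗ[ℚ] Lambda (n+3) Fˣ), IsDelta F (n+1) δF →
    ∀ (D : (ν : KDVF K F K) → (Lambda (n+1) Fˣ →ₗ[ℚ] Lambda n Kˣ)),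
      (∀ ν, IsTameSymbol ν.toDVF n (D ν)) →
    ∀ (DB : (ν : KDVF K F K) →
        ((B2 F ⊗[ℚ] Lambda (n+1) Fˣ) →ₗ[ℚ] (B2 K ⊗[ℚ] Lambda n Kˣ))),
      (∀ ν, IsTameSymbolB ν.toDVF n (D ν) (DB ν)) →
    ∀ α : B2 F ⊗[ℚ] Lambda (n+1) Fˣ,
      h (δF α) = Submodule.Quotient.mk (∑ᶠ ν : KDVF K F K, DB ν α)) ∧
  -- (ii)  δ_m(h(b)) = −Tot_F(b)
  (∀ (δK : (B2 K ⊗[ℚ] Lambda n Kˣ) →ₗ[ℚ] Lambda (n+2) Kˣ), IsDelta K n δK →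
    ∀ (D : (ν : KDVF K F K) → (Lambda (n+3) Fˣ →ₗ[ℚ] Lambda (n+2) Kˣ)),
      (∀ ν, IsTameSymbol ν.toDVF (n+2) (D ν)) →
    ∀ b : Lambda (n+3) Fˣ, ∀ y : B2 K ⊗[ℚ] Lambda n Kˣ,
      Submodule.Quotient.mk y = h b → δK y = - ∑ᶠ ν : KDVF K F K, D ν b) ∧
  -- (iii)  h(f₁ ∧ f₂ ∧ c₃ ∧ … ∧ c_{m+1}) = 0
  (∀ (f₁ f₂ : Fˣ) (c : Fin (n+1) → Kˣ),
    h (wedge (Fin.cons (f₁ : F) (Fin.cons (f₂ : F)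
      (fun i => algebraMap K F (c i : K))))) = 0)

end

/-! ### The valuation ring and its reduction map -/

section Valuation

variable {F K : Type*} [Field F] [Field K] (w : DVF F K)

lemma DVF.v_one : w.v 1 = 0 := by
  have h := w.v_mul 1 1
  rw [mul_one] at h
  omega

/-- The valuation as a homomorphism to the multiplicative copy of `ℤ`. -/
def DVF.vHom : Fˣ →* Multiplicative ℤ where
  toFun x := Multiplicative.ofAdd (w.v x)
  map_one' := by rw [w.v_one]; rfl
  map_mul' x y := by rw [w.v_mul]; rfl

lemma DVF.v_zpow (x : Fˣ) (k : ℤ) : w.v (x ^ k) = k * w.v x := by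
  have h := map_zpow w.vHom x k
  have h' := congrArg Multiplicative.toAdd h
  simpa [DVF.vHom] using h'

lemma DVF.v_neg_one : w.v (-1) = 0 := by
  have h := w.v_mul (-1) (-1)
  rw [neg_mul_neg, one_mul, w.v_one] at h
  omega

/-- The valuation ring `O_ν = {x ∈ Fˣ : ν(x) ≥ 0} ∪ {0}`. -/
def DVF.ring : Subring F where
  carrier := {x | x = 0 ∨ ∃ u : Fˣ, (u : F) = x ∧ 0 ≤ w.v u}
  zero_mem' := Or.inl rfl
  one_mem' := Or.inr ⟨1, rfl, w.v_one.ge⟩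
  mul_mem' := by
    rintro _ _ (rfl | ⟨x, rfl, hx⟩) (rfl | ⟨y, rfl, hy⟩)
    · simp
    · simp
    · simp
    · exact Or.inr ⟨x * y, rfl, by rw [w.v_mul]; omega⟩
  add_mem' := by
    rintro _ _ (rfl | ⟨x, rfl, hx⟩) (rfl | ⟨y, rfl, hy⟩)
    · simp
    · exact Or.inr ⟨y, by simp, hy⟩
    · exact Or.inr ⟨x, by simp, hx⟩
    · by_cases h : (x : F) + y = 0
      · exact Or.inl h
      · exact Or.inr ⟨Units.mk0 _ h, rfl, (le_min hx hy).trans (w.v_min x y _ rfl)⟩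
  neg_mem' := by
    rintro _ (rfl | ⟨x, rfl, hx⟩)
    · simp
    · refine Or.inr ⟨-1 * x, by simp, ?_⟩
      rw [w.v_mul, w.v_neg_one]; omega

/-- The reduction homomorphism `O_ν → k_ν`, i.e. `w.res` restricted to the valuation ring, where
it is additive and multiplicative. -/
def DVF.red : w.ring →+* K where
  toFun x := w.res x
  map_zero' := w.res_zero
  map_one' := w.res_one
  map_mul' := by
    rintro ⟨_, rfl | ⟨x, rfl, hx⟩⟩ ⟨_, rfl | ⟨y, rfl, hy⟩⟩
    · simp [w.res_zero]
    · simp [w.res_zero]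
    · simp [w.res_zero]
    · exact w.res_mul x y hx hy
  map_add' := by
    rintro ⟨_, rfl | ⟨x, rfl, hx⟩⟩ ⟨_, rfl | ⟨y, rfl, hy⟩⟩
    · simp [w.res_zero]
    · simp [w.res_zero]
    · simp [w.res_zero]
    · exact w.res_add x y hx hy

lemma DVF.red_surjective : Function.Surjective w.red := by
  intro c
  by_cases hc : c = 0
  · exact ⟨0, by rw [map_zero, hc]⟩
  · obtain ⟨x, hx, h⟩ := w.res_surj c hc
    exact ⟨⟨x, Or.inr ⟨x, rfl, hx.ge⟩⟩, h⟩

end Valuation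

/-! ### The induced map of residue fields -/

section Residue

variable {F₁ F₂ K₁ K₂ : Type*} [Field F₁] [Field F₂] [Field K₁] [Field K₂]

/-- A ramified embedding of discrete valuation fields carries `O_{ν₂}` into `O_{ν₁}` and `m_{ν₂}`
into `m_{ν₁}`, hence descends to the residue fields. -/
lemma exists_residue_map (i : F₂ →+* F₁) (w₁ : DVF F₁ K₁) (w₂ : DVF F₂ K₂) (e : ℤ) (he : 0 < e)
    (hcomp : ∀ x : F₂ˣ, w₁.v (Units.map i.toMonoidHom x) = e * w₂.v x) :
    ∃ ibar : K₂ →+* K₁,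
      ∀ x : F₂ˣ, 0 ≤ w₂.v x → ibar (w₂.res (x : F₂)) = w₁.res (i (x : F₂)) := by
  have hmem : ∀ x : w₂.ring, (i.comp w₂.ring.subtype) x ∈ w₁.ring := by
    rintro ⟨_, rfl | ⟨x, rfl, hx⟩⟩
    · exact Or.inl (map_zero i)
    · exact Or.inr ⟨Units.map i.toMonoidHom x, rfl, by rw [hcomp]; positivity⟩
  let g : w₂.ring →+* K₁ := w₁.red.comp ((i.comp w₂.ring.subtype).codRestrict w₁.ring hmem)
  have hker : RingHom.ker w₂.red ≤ RingHom.ker g := by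
    rintro ⟨_, rfl | ⟨x, rfl, hx⟩⟩ h
    · exact map_zero g
    · have hpos : 0 < w₂.v x := hx.lt_of_ne fun h0 => w₂.res_unit x h0.symm h
      exact w₁.res_vanish (Units.map i.toMonoidHom x) (by rw [hcomp]; positivity)
  refine ⟨RingHom.liftOfSurjective w₂.red w₂.red_surjective ⟨g, hker⟩, fun x hx => ?_⟩
  exact RingHom.liftOfRightInverse_comp_apply w₂.red _ _ ⟨g, hker⟩ ⟨x, Or.inr ⟨x, rfl, hx⟩⟩

end Residue

/-! ### Wedges and functorial maps on exterior powers -/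

section Wedges

lemma toQ_mul {G : Type*} [CommGroup G] (g h : G) : toQ (g * h) = toQ g + toQ h := by
  simp [toQ, TensorProduct.tmul_add]

lemma toQ_zpow {G : Type*} [CommGroup G] (g : G) (k : ℤ) : toQ (g ^ k) = (k : ℚ) • toQ g := by
  simp [toQ, TensorProduct.smul_tmul', TensorProduct.tmul_smul, Int.cast_smul_eq_zsmul]

lemma toQF_unit {E : Type*} [Field E] (x : Eˣ) : toQF (x : E) = toQ x := by
  simp [toQF]

lemma span_toQ (G : Type*) [CommGroup G] :
    Submodule.span ℚ (Set.range (toQ : G → QW G)) = ⊤ := by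
  refine eq_top_iff.mpr fun z _ => ?_
  induction z using TensorProduct.induction_on with
  | zero => exact zero_mem _
  | tmul q g =>
    have h : q ⊗ₜ[ℤ] g = q • toQ g.toMul := by simp [toQ, TensorProduct.smul_tmul']
    rw [h]
    exact Submodule.smul_mem _ _ (Submodule.subset_span ⟨_, rfl⟩)
  | add x y hx hy => exact add_mem (hx trivial) (hy trivial)

/-- Functoriality of pure wedges; zero entries are harmless since `toQF 0 = 0` and `f 0 = 0`. -/
lemma lamMap_fw {E E' : Type*} [Field E] [Field E'] (f : E →+* E') {n : ℕ} (v : Fin n → E) :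
    lamMap (Units.map f.toMonoidHom) (fw v) = fw fun j => f (v j) := by
  unfold lamMap fw
  rw [ExteriorAlgebra.map_apply_ιMulti]
  congr 1
  funext j
  by_cases h : v j = 0
  · simp [toQF, h]
  · have h1 : toQF (v j) = toQ (Units.mk0 _ h) := by simp [toQF, h]
    have h2 : toQF (f (v j)) = toQ (Units.map f.toMonoidHom (Units.mk0 _ h)) :=
      toQF_unit (Units.map f.toMonoidHom (Units.mk0 _ h))
    simp only [Function.comp_apply]
    rw [h1, h2]
    simp [toQ]

/-- `lamMap f` preserves the degree, which is what makes `lambdaMap` below well defined. -/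
lemma lamMap_mem {G G' : Type*} [CommGroup G] [CommGroup G'] (f : G →* G') (n : ℕ)
    (x : Lambda n G) : lamMap f x.amb ∈ ⋀[ℚ]^n (QW G') := by
  have h := Submodule.mem_map_of_mem (f := (lamMap f).toLinearMap)
    (show x.amb ∈ ⋀[ℚ]^n (QW G) from x.2)
  rw [Submodule.map_pow] at h
  have hle : (LinearMap.range (ExteriorAlgebra.ι ℚ (M := QW G))).map (lamMap f).toLinearMap ≤
      LinearMap.range (ExteriorAlgebra.ι ℚ (M := QW G')) := by
    rintro _ ⟨_, ⟨y, rfl⟩, rfl⟩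
    exact ⟨_, (ExteriorAlgebra.map_apply_ι _ y).symm⟩
  exact SetLike.le_def.mp (pow_le_pow_left' hle n) h

/-- The ambient-algebra embedding of `Λ^n(G)` as a linear map. -/
def ambL (n : ℕ) (G : Type*) [CommGroup G] : Lambda n G →ₗ[ℚ] ExteriorAlgebra ℚ (QW G) :=
  Submodule.subtype (⋀[ℚ]^n (QW G))

/-- The functorial map `Λ^n(f) : Λ^n(G) → Λ^n(G')`. -/
def lambdaMap {G G' : Type*} [CommGroup G] [CommGroup G'] (f : G →* G') (n : ℕ) :
    Lambda n G →ₗ[ℚ] Lambda n G' :=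
  LinearMap.codRestrict (⋀[ℚ]^n (QW G')) ((lamMap f).toLinearMap ∘ₗ ambL n G) (lamMap_mem f n)

/-- `wedge` of units, as the value of the universal alternating map; this gives access to the
antisymmetry of the wedge. -/
lemma wedge_units {E : Type*} [Field E] {n : ℕ} (g : Fin n → Eˣ) :
    wedge (fun j => (g j : E)) = exteriorPower.ιMulti ℚ n fun j => toQ (g j) := by
  apply Subtype.ext
  simp only [wedge, fw, toQF_unit]
  rfl

end Wedges

/-! ### Generators of `Λ^{n+1}(Fˣ)` adapted to a valuation -/

section Generators

variable {F K : Type*} [Field F] [Field K] (w : DVF F K)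

/-- If `p` is a uniformizer, then `Fˣ ⊗ ℚ` is spanned by `p` and the units of `O_ν`, because
`g = p^{ν(g)} · (g p^{-ν(g)})` for every `g : Fˣ`. -/
lemma span_uniformizer_units {p : Fˣ} (hp : w.v p = 1) :
    Submodule.span ℚ (toQ '' {g : Fˣ | g = p ∨ w.v g = 0}) = ⊤ := by
  rw [eq_top_iff, ← span_toQ, Submodule.span_le]
  rintro _ ⟨g, rfl⟩
  have hg : toQ g = (w.v g : ℚ) • toQ p + toQ (g * p ^ (-w.v g)) := by
    rw [toQ_mul, toQ_zpow]; push_cast; module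
  rw [hg]
  refine add_mem (Submodule.smul_mem _ _ (Submodule.subset_span ⟨p, Or.inl rfl, rfl⟩))
    (Submodule.subset_span ⟨_, Or.inr ?_, rfl⟩)
  rw [w.v_mul, w.v_zpow, hp]; ring

/-- `Λ^{n+1}(Fˣ)` is spanned by the wedges `x ∧ u₁ ∧ … ∧ u_n` with the `u_j` units of `O_ν`:
expand in a uniformizer `p` and units; a wedge with two factors `p` vanishes, and a single factor
`p` can be moved to the front. -/
lemma span_wedge_units (n : ℕ) :
    Submodule.span ℚ {a : Lambda (n+1) Fˣ | ∃ (x : Fˣ) (u : Fin n → Fˣ),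
      (∀ j, w.v (u j) = 0) ∧ a = wedge (Fin.cons (x : F) fun j => (u j : F))} = ⊤ := by
  obtain ⟨p, hp⟩ := w.v_surj 1
  have hspan := exteriorPower.ιMulti_span_of_span ℚ (n + 1) (QW Fˣ) (span_uniformizer_units w hp)
  refine eq_top_iff.mpr (hspan.ge.trans (Submodule.span_le.mpr ?_))
  rintro _ ⟨a, ha, rfl⟩
  choose g hg hga using fun j => ha (Set.mem_range_self j)
  obtain rfl : (fun j => toQ (g j)) = a := funext hga
  -- Wedges whose factors after the first are all units belong to the span by definition.
  have key : ∀ h : Fin (n + 1) → Fˣ, (∀ j : Fin n, w.v (h j.succ) = 0) →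
      (exteriorPower.ιMulti ℚ (n + 1) fun j => toQ (h j)) ∈
        (Submodule.span ℚ {a : Lambda (n+1) Fˣ | ∃ (x : Fˣ) (u : Fin n → Fˣ),
          (∀ j, w.v (u j) = 0) ∧ a = wedge (Fin.cons (x : F) fun j => (u j : F))}) := by
    intro h hh
    refine Submodule.subset_span ⟨h 0, fun j => h j.succ, hh, ?_⟩
    rw [← wedge_units]
    congr 1
    funext j
    refine Fin.cases rfl (fun _ => rfl) j
  by_cases hinj : Function.Injective g
  · by_cases hj : ∃ j, g j = p
    · obtain ⟨j, hj⟩ := hj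
      -- The wedge has a single factor `p`; a transposition moves it to the front.
      have hm := key (g ∘ Equiv.swap 0 j) fun k => by
        refine (hg _).resolve_left fun hk => ?_
        have h1 : Equiv.swap 0 j k.succ = j := hinj (hk.trans hj.symm)
        have h2 : k.succ = 0 := by
          rwa [Equiv.swap_apply_eq_iff, Equiv.swap_apply_right] at h1
        exact Fin.succ_ne_zero k h2
      by_cases h0 : j = 0
      · subst h0
        simp only [Equiv.swap_self, Equiv.coe_refl, Function.comp_id] at hm
        exact hm
      · have hs := AlternatingMap.map_swap (exteriorPower.ιMulti ℚ (n + 1) (M := QW Fˣ))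
          (fun j => toQ (g j)) (Ne.symm h0)
        rw [← neg_eq_iff_eq_neg] at hs
        exact hs ▸ neg_mem hm
    · exact key g fun k => (hg _).resolve_left fun hk => hj ⟨_, hk⟩
  · have h0 := AlternatingMap.map_eq_zero_of_not_injective (exteriorPower.ιMulti ℚ (n + 1))
      (fun j => toQ (g j)) fun hi => hinj fun a b hab => hi (congrArg toQ hab)
    exact h0 ▸ zero_mem _

end Generators

/-- functoriality of the tame symbol.  Let `i : F₂ ↪ F₁` be an embedding of
fields, `ν₁, ν₂` discrete valuations on `F₁, F₂` (with residue fields `K₁, K₂`), and `e > 0`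
with `ν₁(i(x)) = e·ν₂(x)` for all `x ∈ F₂ˣ`.  Then `i` maps `O_{ν₂}` into `O_{ν₁}` and
induces an embedding `ī : k_{ν₂} ↪ k_{ν₁}`, and for every `n ≥ 1` (written `n+1`) and every
`a ∈ Λ^n(F₂ˣ)` one has `∂_{ν₁}(Λ^n(i)(a)) = e · Λ^{n−1}(ī)(∂_{ν₂}(a))`. -/
theorem tame_symbol_functorial (F₁ F₂ K₁ K₂ : Type*)
    [Field F₁] [Field F₂] [Field K₁] [Field K₂]
    (i : F₂ →+* F₁) (w₁ : DVF F₁ K₁) (w₂ : DVF F₂ K₂) (e : ℤ) (he : 0 < e)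
    (hcomp : ∀ x : F₂ˣ, w₁.v (Units.map i.toMonoidHom x) = e * w₂.v x) :
    ∃ ibar : K₂ →+* K₁,
      (∀ x : F₂ˣ, 0 ≤ w₂.v x → ibar (w₂.res (x : F₂)) = w₁.res (i (x : F₂))) ∧
      ∀ (n : ℕ)
        (D₁ : Lambda (n+1) F₁ˣ →ₗ[ℚ] Lambda n K₁ˣ), IsTameSymbol w₁ n D₁ →
      ∀ (D₂ : Lambda (n+1) F₂ˣ →ₗ[ℚ] Lambda n K₂ˣ), IsTameSymbol w₂ n D₂ →
      ∀ (a : Lambda (n+1) F₂ˣ) (a' : Lambda (n+1) F₁ˣ),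
        a'.amb = lamMap (Units.map i.toMonoidHom) a.amb →
        (D₁ a').amb = (e : ℚ) • lamMap (Units.map ibar.toMonoidHom) (D₂ a).amb := by
  obtain ⟨ibar, hibar⟩ := exists_residue_map i w₁ w₂ e he hcomp
  refine ⟨ibar, hibar, fun n D₁ h₁ D₂ h₂ a a' ha => ?_⟩
  obtain rfl : a' = lambdaMap (Units.map i.toMonoidHom) (n + 1) a := Subtype.ext ha
  -- Both sides are linear in `a`, so it suffices to compare them on the spanning wedges.
  have hlin : ambL n K₁ˣ ∘ₗ D₁ ∘ₗ lambdaMap (Units.map i.toMonoidHom) (n + 1) =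
      (e : ℚ) • ((lamMap (Units.map ibar.toMonoidHom)).toLinearMap ∘ₗ ambL n K₂ˣ ∘ₗ D₂) := by
    refine LinearMap.ext_on (span_wedge_units w₂ n) ?_
    rintro _ ⟨x, u, hu, rfl⟩
    have hmap : lambdaMap (Units.map i.toMonoidHom) (n + 1)
          (wedge (Fin.cons (x : F₂) fun j => (u j : F₂))) =
        wedge (Fin.cons ((Units.map i.toMonoidHom x : F₁ˣ) : F₁)
          fun j => ((Units.map i.toMonoidHom (u j) : F₁ˣ) : F₁)) := by
      refine Subtype.ext ((lamMap_fw i _).trans (congrArg fw (funext fun j => ?_)))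
      refine Fin.cases rfl (fun _ => rfl) j
    have hres : (fun j => w₁.res ((Units.map i.toMonoidHom (u j) : F₁ˣ) : F₁)) =
        fun j => ibar (w₂.res (u j : F₂)) :=
      funext fun j => (hibar (u j) (hu j).ge).symm
    have hfw : lamMap (Units.map ibar.toMonoidHom)
          (ambL n K₂ˣ (wedge fun j => w₂.res (u j : F₂))) =
        ambL n K₁ˣ (wedge fun j => ibar (w₂.res (u j : F₂))) := lamMap_fw ibar _
    simp only [LinearMap.comp_apply, LinearMap.smul_apply, AlgHom.toLinearMap_apply]
    rw [hmap, h₁ _ _ fun j => by rw [hcomp, hu, mul_zero], h₂ _ _ hu, hcomp, hres, map_smul,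
      map_smul, map_smul, hfw, smul_smul, Int.cast_mul]
  exact LinearMap.congr_fun hlin a
end

section
/- Let K be an algebraically closed field of characteristic 0, let K(t) be the rational function field, and let m≥2. Then the ℚ-vector space Λ^{m+1}(K(t)ˣ) is spanned by the elements f∧(1−f)∧w with f∈K(t)∖{0,1} and w∈Λ^{m−1}(K(t)ˣ), together with the elements g₁∧g₂∧c₃∧…∧c_{m+1} with g₁,g₂∈K(t)ˣ and c₃,…,c_{m+1}∈Kˣ. (Equivalently: the image of δ_{m+1}: B₂(K(t))⊗Λ^{m−1}(K(t)ˣ)→Λ^{m+1}(K(t)ˣ) and the image of the multiplication map Λ²(K(t)ˣ)⊗Λ^{m−1}(Kˣ)→Λ^{m+1}(K(t)ˣ) together generate Λ^{m+1}(K(t)ˣ).) -/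
/-! Write `V = K(t)ˣ ⊗ ℚ` for the degree-one part of the exterior algebra, `C ⊆ V` for the subspace
spanned by the constants, and `J ⊆ V · V` for the subspace spanned by the Steinberg elements
`f ∧ (1 − f)`.

Since `K` is algebraically closed, `V` is spanned by the constants and the linear polynomials
`t − a` (`toQF_mem_linearSubspace`). For `a ≠ b` put `f = (t − a) / (b − a)`, so that
`1 − f = −(t − b) / (b − a)`; signs are torsion, hence
`(t − a) ∧ (t − b) = f ∧ (1 − f) + (t − a) ∧ (b − a) + (b − a) ∧ (t − b)`.
This gives `V · V ≤ J + V · C` (`degOne_mul_degOne_le`). The elements of `J` have even degree and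
so commute with `V`; an induction on the degree then gives
`V ^ (n + 2) ≤ J · V ^ n + V · C ^ (n + 1)` (`degOne_pow_le`). In degree `k + 3` the first summand
is spanned by the elements `f ∧ (1 − f) ∧ w`, and the second is contained in `V · V · C ^ (k + 1)`,
which is spanned by the elements `g₁ ∧ g₂ ∧ c₃ ∧ … ∧ c_{k+3}`.
-/

open scoped TensorProduct

set_option maxHeartbeats 1000000
set_option synthInstance.maxHeartbeats 1000000

noncomputable section

open ExteriorAlgebra

/-! ### Wedges of field elements and Steinberg elements -/

section Field

variable {E : Type*} [Field E]

lemma toQF_mul {x y : E} (hx : x ≠ 0) (hy : y ≠ 0) : toQF (x * y) = toQF x + toQF y := by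
  have h : Units.mk0 (x * y) (mul_ne_zero hx hy) = Units.mk0 x hx * Units.mk0 y hy := by
    ext; rfl
  simp only [toQF, dif_neg hx, dif_neg hy, dif_neg (mul_ne_zero hx hy), toQ, h, ofMul_mul,
    TensorProduct.tmul_add]

lemma toQF_one : toQF (1 : E) = 0 := by
  have h := toQF_mul (one_ne_zero (α := E)) (one_ne_zero (α := E))
  rw [mul_one] at h
  exact left_eq_add.mp h

lemma toQF_zero : toQF (0 : E) = 0 := by simp [toQF]

lemma toQF_div {x y : E} (hx : x ≠ 0) (hy : y ≠ 0) : toQF (x / y) = toQF x - toQF y := by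
  have h := toQF_mul (div_ne_zero hx hy) hy
  rw [div_mul_cancel₀ _ hy] at h
  rw [h, add_sub_cancel_right]

/-- Signs are torsion, so they vanish in `Eˣ ⊗ ℚ`. -/
lemma toQF_neg (x : E) : toQF (-x) = toQF x := by
  rcases eq_or_ne x 0 with rfl | hx
  · rw [neg_zero]
  have h1 : toQF (-1 : E) = 0 := by
    have h := toQF_mul (neg_ne_zero.mpr (one_ne_zero (α := E)))
      (neg_ne_zero.mpr (one_ne_zero (α := E)))
    rw [neg_mul_neg, one_mul, toQF_one, ← two_smul ℚ] at h
    exact (smul_eq_zero.mp h.symm).resolve_left two_ne_zero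
  rw [← neg_one_mul, toQF_mul (neg_ne_zero.mpr one_ne_zero) hx, h1, zero_add]

variable (E) in
lemma span_range_toQF : Submodule.span ℚ (Set.range (toQF : E → QW Eˣ)) = ⊤ := by
  refine eq_top_iff.mpr fun x _ => ?_
  induction x using TensorProduct.induction_on with
  | zero => exact zero_mem _
  | add x y hx hy => exact add_mem (hx trivial) (hy trivial)
  | tmul q g =>
    have h : q ⊗ₜ[ℤ] g = q • toQF ((g.toMul : Eˣ) : E) := by
      simp [toQF, toQ, TensorProduct.smul_tmul']
    rw [h]
    exact Submodule.smul_mem _ _ (Submodule.subset_span ⟨_, rfl⟩)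

variable (E) in
/-- The degree-one part `Eˣ ⊗ ℚ` of the exterior algebra; `degOne E ^ n` is `⋀[ℚ]^n (QW Eˣ)`
by definition. -/
abbrev degOne : Submodule ℚ (ExteriorAlgebra ℚ (QW Eˣ)) := LinearMap.range (ι ℚ)

variable (E) in
lemma degOne_eq_span :
    degOne E = Submodule.span ℚ (Set.range fun x : E => ι ℚ (toQF x)) := by
  rw [degOne, LinearMap.range_eq_map, ← span_range_toQF, Submodule.map_span, ← Set.range_comp]
  rfl

variable (E) in
/-- The span of the Steinberg elements `f ∧ (1 − f)`. -/
def steinberg : Submodule ℚ (ExteriorAlgebra ℚ (QW Eˣ)) :=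
  Submodule.span ℚ {y | ∃ f : E, f ≠ 0 ∧ f ≠ 1 ∧ y = fw ![f, 1 - f]}

lemma fw_pair (x y : E) : fw ![x, y] = ι ℚ (toQF x) * ι ℚ (toQF y) := by
  simp [fw, ιMulti_apply, Matrix.vecTail]

lemma fw_cons {n : ℕ} (x : E) (v : Fin n → E) :
    fw (Fin.cons x v : Fin (n + 1) → E) = ι ℚ (toQF x) * fw v := by
  simp [fw, ιMulti_apply, Matrix.vecTail]

lemma ι_mul_swap (x y : QW Eˣ) :
    (ι ℚ x * ι ℚ y : ExteriorAlgebra ℚ (QW Eˣ)) = -(ι ℚ y * ι ℚ x) :=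
  eq_neg_of_add_eq_zero_left (ι_add_mul_swap x y)

/-- Steinberg elements have even degree, hence commute with degree-one elements. -/
lemma degOne_mul_steinberg_le : degOne E * steinberg E ≤ steinberg E * degOne E := by
  rw [Submodule.mul_le]
  rintro _ ⟨v, rfl⟩ s hs
  have hcomm : ι ℚ v * s = s * ι ℚ v := by
    induction hs using Submodule.span_induction with
    | zero => simp
    | add x y _ _ hx hy => rw [mul_add, add_mul, hx, hy]
    | smul q x _ hx => rw [mul_smul_comm, smul_mul_assoc, hx]
    | mem x hx =>
      obtain ⟨f, -, -, rfl⟩ := hx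
      rw [fw_pair, ← mul_assoc, ι_mul_swap v, neg_mul, mul_assoc, ι_mul_swap v, mul_neg, neg_neg,
        mul_assoc]
  rw [hcomm]
  exact Submodule.mul_mem_mul hs ⟨v, rfl⟩

end Field

/-! ### Linear polynomials and the degree-by-degree reduction -/

section RatFunc

variable (K : Type*) [Field K]

/-- The span in degree one of the nonzero constants of `K(t)`. -/
def constPart : Submodule ℚ (ExteriorAlgebra ℚ (QW (RatFunc K)ˣ)) :=
  Submodule.span ℚ (Set.range fun c : Kˣ => ι ℚ (toQF (algebraMap K (RatFunc K) c)))

lemma constPart_le : constPart K ≤ degOne (RatFunc K) := by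
  rw [constPart, Submodule.span_le]
  rintro _ ⟨c, rfl⟩
  exact ⟨_, rfl⟩

/-- The linear polynomial `t − a`, as a rational function. -/
def linearFactor (a : K) : RatFunc K := RatFunc.X - algebraMap K (RatFunc K) a

lemma linearFactor_eq (a : K) :
    linearFactor K a = algebraMap (Polynomial K) (RatFunc K) (Polynomial.X - Polynomial.C a) := by
  rw [map_sub, RatFunc.algebraMap_X, RatFunc.algebraMap_C]
  rfl

lemma linearFactor_ne_zero (a : K) : linearFactor K a ≠ 0 := by
  rw [linearFactor_eq]
  exact RatFunc.algebraMap_ne_zero (Polynomial.X_sub_C_ne_zero a)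

/-- The span of the classes of nonzero constants and of linear polynomials `t − a`. -/
def linearSubspace : Submodule ℚ (QW (RatFunc K)ˣ) :=
  Submodule.span ℚ ((Set.range fun c : Kˣ => toQF (algebraMap K (RatFunc K) c)) ∪
    Set.range fun a : K => toQF (linearFactor K a))

/-- Over an algebraically closed field, factoring numerator and denominator writes every rational
function as a product of a constant and integral powers of linear polynomials. -/
lemma toQF_mem_linearSubspace [IsAlgClosed K] (x : RatFunc K) :
    toQF x ∈ linearSubspace K := by
  have hpoly (p : Polynomial K) (hp : p ≠ 0) :
      toQF (algebraMap (Polynomial K) (RatFunc K) p) ∈ linearSubspace K := by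
    have hroots (s : Multiset K) :
        algebraMap (Polynomial K) (RatFunc K)
          (s.map fun a => Polynomial.X - Polynomial.C a).prod ≠ 0 ∧
        toQF (algebraMap (Polynomial K) (RatFunc K)
          (s.map fun a => Polynomial.X - Polynomial.C a).prod) ∈ linearSubspace K := by
      induction s using Multiset.induction_on with
      | empty => simp [toQF_one]
      | cons a s ih =>
        rw [Multiset.map_cons, Multiset.prod_cons, map_mul, ← linearFactor_eq]
        refine ⟨mul_ne_zero (linearFactor_ne_zero K a) ih.1, ?_⟩
        rw [toQF_mul (linearFactor_ne_zero K a) ih.1]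
        exact add_mem (Submodule.subset_span (Or.inr ⟨a, rfl⟩)) ih.2
    have hlc : p.leadingCoeff ≠ 0 := Polynomial.leadingCoeff_ne_zero.mpr hp
    rw [(IsAlgClosed.splits p).eq_prod_roots, map_mul, toQF_mul
      (RatFunc.algebraMap_ne_zero (Polynomial.C_ne_zero.mpr hlc)) (hroots _).1]
    refine add_mem (Submodule.subset_span (Or.inl ⟨Units.mk0 _ hlc, ?_⟩)) (hroots _).2
    rw [RatFunc.algebraMap_C]
    rfl
  rcases eq_or_ne x 0 with rfl | hx
  · rw [toQF_zero]
    exact zero_mem _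
  have hn : x.num ≠ 0 := RatFunc.num_ne_zero hx
  have hd : x.denom ≠ 0 := RatFunc.denom_ne_zero x
  rw [← RatFunc.num_div_denom x,
    toQF_div (RatFunc.algebraMap_ne_zero hn) (RatFunc.algebraMap_ne_zero hd)]
  exact sub_mem (hpoly _ hn) (hpoly _ hd)

lemma degOne_eq_span_linear [IsAlgClosed K] :
    degOne (RatFunc K) = Submodule.span ℚ
      ((Set.range fun c : Kˣ => ι ℚ (toQF (algebraMap K (RatFunc K) c))) ∪
        Set.range fun a : K => ι ℚ (toQF (linearFactor K a))) := by
  have htop : linearSubspace K = ⊤ := by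
    rw [eq_top_iff, ← span_range_toQF, Submodule.span_le]
    rintro _ ⟨x, rfl⟩
    exact toQF_mem_linearSubspace K x
  rw [degOne, LinearMap.range_eq_map, ← htop, linearSubspace, Submodule.map_span, Set.image_union,
    ← Set.range_comp, ← Set.range_comp]
  rfl

/-- The Steinberg relation for `f = (t − a) / (b − a)` trades `(t − a) ∧ (t − b)` for wedges with a
constant factor. -/
lemma linearFactor_wedge {a b : K} (hab : a ≠ b) :
    ι ℚ (toQF (linearFactor K a)) * ι ℚ (toQF (linearFactor K b)) ∈
      steinberg (RatFunc K) ⊔ degOne (RatFunc K) * constPart K := by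
  have hc : b - a ≠ 0 := sub_ne_zero.mpr hab.symm
  set c : RatFunc K := algebraMap K (RatFunc K) (b - a) with hcdef
  have hc' : c ≠ 0 := by rwa [hcdef, Ne, map_eq_zero]
  have hcmem : ι ℚ (toQF c) ∈ constPart K := Submodule.subset_span ⟨Units.mk0 _ hc, rfl⟩
  have ha := linearFactor_ne_zero K a
  have hb := linearFactor_ne_zero K b
  have hf : 1 - linearFactor K a / c = -(linearFactor K b / c) := by
    field_simp
    simp only [hcdef, linearFactor, map_sub]
    ring
  have hf1 : linearFactor K a / c ≠ 1 := by
    intro h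
    rw [h, sub_self, zero_eq_neg] at hf
    exact div_ne_zero hb hc' hf
  have hst : fw ![linearFactor K a / c, 1 - linearFactor K a / c] ∈ steinberg (RatFunc K) :=
    Submodule.subset_span ⟨_, div_ne_zero ha hc', hf1, rfl⟩
  have key : ι ℚ (toQF (linearFactor K a)) * ι ℚ (toQF (linearFactor K b)) =
      fw ![linearFactor K a / c, 1 - linearFactor K a / c] +
        (ι ℚ (toQF (linearFactor K a)) * ι ℚ (toQF c) -
          ι ℚ (toQF (linearFactor K b)) * ι ℚ (toQF c)) := by
    rw [fw_pair, hf, toQF_neg, toQF_div ha hc', toQF_div hb hc', map_sub, map_sub, sub_mul,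
      mul_sub, mul_sub, ι_sq_zero, ι_mul_swap (toQF c)]
    abel
  rw [key]
  exact Submodule.add_mem_sup hst (sub_mem (Submodule.mul_mem_mul ⟨_, rfl⟩ hcmem)
    (Submodule.mul_mem_mul ⟨_, rfl⟩ hcmem))

lemma degOne_mul_degOne_le [IsAlgClosed K] :
    degOne (RatFunc K) * degOne (RatFunc K) ≤
      steinberg (RatFunc K) ⊔ degOne (RatFunc K) * constPart K := by
  nth_rewrite 1 2 [degOne_eq_span_linear K]
  rw [Submodule.span_mul_span, Submodule.span_le]
  have hc (c : Kˣ) : ι ℚ (toQF (algebraMap K (RatFunc K) c)) ∈ constPart K :=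
    Submodule.subset_span ⟨c, rfl⟩
  rintro _ ⟨_, ⟨c, rfl⟩ | ⟨a, rfl⟩, _, ⟨d, rfl⟩ | ⟨b, rfl⟩, rfl⟩
  · exact Submodule.mem_sup_right (Submodule.mul_mem_mul ⟨_, rfl⟩ (hc d))
  · refine Submodule.mem_sup_right ?_
    simp only
    rw [ι_mul_swap]
    exact neg_mem (Submodule.mul_mem_mul ⟨_, rfl⟩ (hc c))
  · exact Submodule.mem_sup_right (Submodule.mul_mem_mul ⟨_, rfl⟩ (hc d))
  · rcases eq_or_ne a b with rfl | hab
    · simp only [ι_sq_zero]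
      exact zero_mem _
    · exact linearFactor_wedge K hab

/-- Every wedge is, modulo Steinberg elements, a combination of wedges in which all factors but
the first are constant. -/
lemma degOne_pow_le [IsAlgClosed K] (n : ℕ) :
    degOne (RatFunc K) ^ (n + 2) ≤
      steinberg (RatFunc K) * degOne (RatFunc K) ^ n ⊔
        degOne (RatFunc K) * constPart K ^ (n + 1) := by
  induction n with
  | zero =>
    simpa only [zero_add, pow_zero, pow_one, mul_one, pow_two] using degOne_mul_degOne_le K
  | succ n ih =>
    rw [pow_succ' _ (n + 2)]
    refine (mul_le_mul_right ih _).trans ?_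
    rw [Submodule.mul_sup]
    refine sup_le ?_ ?_
    · rw [← mul_assoc]
      refine (mul_le_mul_left degOne_mul_steinberg_le _).trans ?_
      rw [mul_assoc, ← pow_succ']
      exact le_sup_left
    · rw [← mul_assoc]
      refine (mul_le_mul_left (degOne_mul_degOne_le K) _).trans ?_
      rw [Submodule.sup_mul, mul_assoc, ← pow_succ']
      exact sup_le_sup_right
        (mul_le_mul_right (pow_le_pow_left₀ bot_le (constPart_le K) _) _) _

open scoped Pointwise in
lemma exists_fw_of_mem_pow (n : ℕ) :
    ∀ y ∈ (Set.range fun c : Kˣ => (ι ℚ (toQF (algebraMap K (RatFunc K) c)) :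
      ExteriorAlgebra ℚ (QW (RatFunc K)ˣ))) ^ n,
      ∃ c : Fin n → Kˣ, y = fw fun i => algebraMap K (RatFunc K) (c i : K) := by
  induction n with
  | zero =>
    intro y hy
    rw [pow_zero, Set.mem_one] at hy
    exact ⟨Fin.elim0, by simp [hy, fw]⟩
  | succ n ih =>
    intro y hy
    rw [pow_succ'] at hy
    obtain ⟨_, ⟨c, rfl⟩, z, hz, rfl⟩ := hy
    obtain ⟨d, rfl⟩ := ih z hz
    refine ⟨Fin.cons c d, ?_⟩
    simp only
    rw [← fw_cons]
    congr 1
    funext i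
    refine Fin.cases ?_ (fun j => ?_) i <;> simp

end RatFunc

end

/-- Let `K` be an algebraically closed field of characteristic `0` and
`m ≥ 2` (here `m = k+2`).  Then `Λ^{m+1}(K(t)ˣ)` is spanned by the elements
`f ∧ (1−f) ∧ w` with `f ∈ K(t)∖{0,1}`, `w ∈ Λ^{m−1}(K(t)ˣ)`, together with the elements
`g₁ ∧ g₂ ∧ c₃ ∧ … ∧ c_{m+1}` with `g₁, g₂ ∈ K(t)ˣ` and `c₃,…,c_{m+1} ∈ Kˣ`. -/
theorem ratfunc_lambda_spanned (K : Type*) [Field K] [IsAlgClosed K] [CharZero K] (k : ℕ) :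
    ∀ x : Lambda (k+3) (RatFunc K)ˣ,
      x.amb ∈ Submodule.span ℚ
        ({y : ExteriorAlgebra ℚ (QW (RatFunc K)ˣ) | ∃ f : RatFunc K, f ≠ 0 ∧ f ≠ 1 ∧
            ∃ w ∈ ⋀[ℚ]^(k+1) (QW (RatFunc K)ˣ), y = fw ![f, 1 - f] * w} ∪
         {y : ExteriorAlgebra ℚ (QW (RatFunc K)ˣ) |
            ∃ (g₁ g₂ : RatFunc K) (c : Fin (k+1) → Kˣ),
              y = fw (Fin.cons g₁ (Fin.cons g₂
                (fun i => algebraMap K (RatFunc K) (c i : K))))}) := by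
  intro x
  have hx : x.amb ∈ degOne (RatFunc K) ^ (k + 1 + 2) := x.2
  refine (sup_le ?_ ?_ : _ ≤ Submodule.span ℚ _) (degOne_pow_le K (k + 1) hx)
  · rw [Submodule.mul_le]
    intro s hs w hw
    induction hs using Submodule.span_induction with
    | zero => simp
    | add y z _ _ hy hz => rw [add_mul]; exact add_mem hy hz
    | smul q y _ hy => rw [smul_mul_assoc]; exact Submodule.smul_mem _ q hy
    | mem y hy =>
      obtain ⟨f, h0, h1, rfl⟩ := hy
      exact Submodule.subset_span (Or.inl ⟨f, h0, h1, w, hw, rfl⟩)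
  · rw [pow_succ']
    refine (mul_le_mul_right (mul_le_mul_left (constPart_le K) _) _).trans ?_
    rw [degOne_eq_span, constPart, Submodule.span_pow, Submodule.span_mul_span,
      Submodule.span_mul_span, Submodule.span_le]
    rintro _ ⟨_, ⟨g₁, rfl⟩, _, ⟨_, ⟨g₂, rfl⟩, z, hz, rfl⟩, rfl⟩
    obtain ⟨c, rfl⟩ := exists_fw_of_mem_pow K (k + 1) z hz
    exact Submodule.subset_span (Or.inr ⟨g₁, g₂, c, by rw [fw_cons, fw_cons]⟩)
end
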